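/- For all integers m ≥ 0 and l ∈ ℤ, one has S_{m+1,l}(q) = q^{−m} S̃_{m,l+1}(q) + S_{m,l}(q) + q^{−m+l−1} S_{m,l−1}(q), an identity in ℤ[q, q⁻¹]. -/

import Mathlib

/-!
The identity holds summand by summand, up to a shift of `ν`. Apply the dual q-Pascal rule
`C(m+1,ν) = C(m,ν) + q^(m+1-ν) C(m,ν-1)` to the summand of `S_{m+1,l}` at `ν`: the part with
`C(m,ν)` is the summand of `q^(-m+l-1) S_{m,l-1}` at `ν`. In the part with `C(m,ν-1)`, the rule
`C(ν,k) = C(ν-1,k-1) + q^k C(ν-1,k)` for `k = m+1-l-ν` produces the summands of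
`q^(-m) S̃_{m,l+1}` and `S_{m,l}` at `ν-1`.
-/

open LaurentPolynomial

/-- The Gaussian (q-)binomial coefficient `C(n,k)_q` as a Laurent polynomial in `q`,
defined by the q-Pascal recursion `C(n+1,k+1)_q = C(n,k)_q + q^(k+1) C(n,k+1)_q`. -/
noncomputable def qbinom : ℕ → ℕ → LaurentPolynomial ℤ
  | _, 0 => 1
  | 0, _ + 1 => 0
  | n + 1, k + 1 => qbinom n k + T ((k : ℤ) + 1) * qbinom n (k + 1)

/-- `C(n,k)_q` for integer arguments, zero unless `0 ≤ k ≤ n`. -/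
noncomputable def qbinomZ (n k : ℤ) : LaurentPolynomial ℤ :=
  if 0 ≤ k ∧ k ≤ n then qbinom n.toNat k.toNat else 0

/-- `S_{m,l}(q) = Σ_{ν∈ℤ} q^{(ν+l−m)(ν+l)+ν(ν−m)} C(m,ν)_q C(ν, m−l−ν)_q`. -/
noncomputable def Sq (m : ℕ) (l : ℤ) : LaurentPolynomial ℤ :=
  ∑ᶠ ν : ℤ,
    T ((ν + l - m) * (ν + l) + ν * (ν - m)) * (qbinomZ m ν * qbinomZ ν (m - l - ν))

/-- `S̃_{m,l}(q) = Σ_{ν∈ℤ} q^{(ν+l−m)(ν+l−1)+ν(ν−m)} C(m,ν)_q C(ν, m−l−ν)_q`. -/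
noncomputable def Sqt (m : ℕ) (l : ℤ) : LaurentPolynomial ℤ :=
  ∑ᶠ ν : ℤ,
    T ((ν + l - m) * (ν + l - 1) + ν * (ν - m)) * (qbinomZ m ν * qbinomZ ν (m - l - ν))

theorem qbinom_eq_zero_of_lt {n k : ℕ} (h : n < k) : qbinom n k = 0 := by
  induction n generalizing k with
  | zero =>
    obtain ⟨k, rfl⟩ := Nat.exists_eq_add_one.mpr h
    rw [qbinom]
  | succ n ih =>
    obtain ⟨k, rfl⟩ := Nat.exists_eq_add_one.mpr (n.succ_pos.trans h)
    rw [qbinom, ih (by omega), ih (by omega), mul_zero, add_zero]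

theorem qbinomZ_eq_zero_of_neg_left {n : ℤ} (hn : n < 0) (k : ℤ) : qbinomZ n k = 0 :=
  if_neg (by omega)

theorem qbinomZ_eq_zero_of_neg_right (n : ℤ) {k : ℤ} (hk : k < 0) : qbinomZ n k = 0 :=
  if_neg (by omega)

theorem qbinomZ_natCast (n k : ℕ) : qbinomZ n k = qbinom n k := by
  rcases le_or_gt k n with h | h
  · simp [qbinomZ, h]
  · rw [qbinom_eq_zero_of_lt h, qbinomZ, if_neg (by omega)]

theorem qbinomZ_zero_right {n : ℤ} (hn : 0 ≤ n) : qbinomZ n 0 = 1 := by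
  simp [qbinomZ, hn, qbinom]

theorem qbinomZ_zero_left (k : ℤ) : qbinomZ 0 k = if k = 0 then 1 else 0 := by
  split_ifs with hk
  · rw [hk, qbinomZ_zero_right le_rfl]
  · exact if_neg (by omega)

theorem qbinomZ_add_one_left {n : ℤ} (hn : n ≠ -1) (k : ℤ) :
    qbinomZ (n + 1) k = qbinomZ n (k - 1) + T k * qbinomZ n k := by
  rcases lt_or_ge n 0 with hneg | hpos
  · simp [qbinomZ_eq_zero_of_neg_left hneg, qbinomZ_eq_zero_of_neg_left (n := n + 1) (by omega)]
  rcases lt_trichotomy k 0 with hk | rfl | hk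
  · simp [qbinomZ_eq_zero_of_neg_right _ hk, qbinomZ_eq_zero_of_neg_right n (k := k - 1) (by omega)]
  · simp [qbinomZ_zero_right hpos, qbinomZ_zero_right (n := n + 1) (by omega),
      qbinomZ_eq_zero_of_neg_right]
  · lift n to ℕ using hpos
    obtain ⟨k, rfl⟩ : ∃ j : ℕ, k = j + 1 := ⟨(k - 1).toNat, by omega⟩
    have hrec : qbinom (n + 1) (k + 1) = qbinom n k + T (k + 1) * qbinom n (k + 1) := rfl
    simpa [← qbinomZ_natCast] using hrec

theorem qbinomZ_add_one_left_dual {n : ℤ} (hn : n ≠ -1) (k : ℤ) :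
    qbinomZ (n + 1) k = qbinomZ n k + T (n + 1 - k) * qbinomZ n (k - 1) := by
  rcases lt_or_ge n 0 with hneg | hpos
  · simp [qbinomZ_eq_zero_of_neg_left hneg, qbinomZ_eq_zero_of_neg_left (n := n + 1) (by omega)]
  clear hn
  induction n, hpos using Int.leInduction generalizing k with
  | base =>
    rw [qbinomZ_add_one_left (by omega)]
    rcases eq_or_ne k 0 with rfl | hk
    · simp [qbinomZ_zero_left]
    rcases eq_or_ne k 1 with rfl | hk'
    · simp [qbinomZ_zero_left]
    · simp [qbinomZ_zero_left, hk, sub_ne_zero.mpr hk']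
  | succ n hpos ih =>
    have hT : (T k * T (n + 1 - k) : ℤ[T;T⁻¹]) = T (n + 1 + 1 - k) * T (k - 1) := by
      rw [← T_add, ← T_add]
      congr 1
      ring
    calc
      qbinomZ (n + 1 + 1) k = qbinomZ (n + 1) (k - 1) + T k * qbinomZ (n + 1) k :=
        qbinomZ_add_one_left (by omega) k
      _ = qbinomZ n (k - 1) + T (n + 1 + 1 - k) * qbinomZ n (k - 1 - 1) +
          T k * (qbinomZ n k + T (n + 1 - k) * qbinomZ n (k - 1)) := by
        rw [ih k, ih (k - 1), show n + 1 - (k - 1) = n + 1 + 1 - k by ring]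
      _ = qbinomZ n (k - 1) + T k * qbinomZ n k +
          T (n + 1 + 1 - k) * (qbinomZ n (k - 1 - 1) + T (k - 1) * qbinomZ n (k - 1)) := by
        linear_combination qbinomZ n (k - 1) * hT
      _ = qbinomZ (n + 1) k + T (n + 1 + 1 - k) * qbinomZ (n + 1) (k - 1) := by
        rw [qbinomZ_add_one_left (by omega) k, qbinomZ_add_one_left (by omega) (k - 1)]

theorem qbinomZ_add_one_left_mul_qbinomZ {n : ℤ} (hn : n ≠ -1) (j k : ℤ) :
    qbinomZ (n + 1) j * qbinomZ j k = qbinomZ n j * qbinomZ j k +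
      T (n + 1 - j) * (qbinomZ n (j - 1) * qbinomZ (j - 1) (k - 1) +
        T k * (qbinomZ n (j - 1) * qbinomZ (j - 1) k)) := by
  rw [qbinomZ_add_one_left_dual hn j]
  rcases eq_or_ne j 0 with rfl | hj
  · simp [qbinomZ_eq_zero_of_neg_right]
  · have hpascal := qbinomZ_add_one_left (n := j - 1) (by omega) k
    rw [sub_add_cancel] at hpascal
    linear_combination T (n + 1 - j) * qbinomZ n (j - 1) * hpascal

/-- The summand of `S_{m,l}(q)` at `ν`. The index `m` is an integer, so that the recursion for the
summands needs no casts. -/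
noncomputable def sqTerm (m l ν : ℤ) : ℤ[T;T⁻¹] :=
  T ((ν + l - m) * (ν + l) + ν * (ν - m)) * (qbinomZ m ν * qbinomZ ν (m - l - ν))

/-- The summand of `S̃_{m,l}(q)` at `ν`, with an integer index `m` as in `sqTerm`. -/
noncomputable def sqtTerm (m l ν : ℤ) : ℤ[T;T⁻¹] :=
  T ((ν + l - m) * (ν + l - 1) + ν * (ν - m)) * (qbinomZ m ν * qbinomZ ν (m - l - ν))

theorem hasFiniteSupport_qbinomZ (n : ℤ) : (qbinomZ n).HasFiniteSupport :=
  (Set.finite_Icc 0 n).subset fun _ hk ↦ of_not_not fun hmem ↦ hk (if_neg hmem)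

@[fun_prop]
theorem hasFiniteSupport_sqTerm (m l : ℤ) : (sqTerm m l).HasFiniteSupport :=
  ((hasFiniteSupport_qbinomZ m).mul_left _).mul_right _

@[fun_prop]
theorem hasFiniteSupport_sqtTerm (m l : ℤ) : (sqtTerm m l).HasFiniteSupport :=
  ((hasFiniteSupport_qbinomZ m).mul_left _).mul_right _

theorem sqTerm_add_one {m : ℤ} (hm : m ≠ -1) (l ν : ℤ) :
    sqTerm (m + 1) l ν = T (-m) * sqtTerm m (l + 1) (ν - 1) + sqTerm m l (ν - 1) +
      T (-m + l - 1) * sqTerm m (l - 1) ν := by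
  have hsplit := qbinomZ_add_one_left_mul_qbinomZ hm ν (m + 1 - l - ν)
  simp only [sqTerm, sqtTerm, hsplit, show m - (l + 1) - (ν - 1) = m + 1 - l - ν - 1 by ring,
    show m - l - (ν - 1) = m + 1 - l - ν by ring, show m - (l - 1) - ν = m + 1 - l - ν by ring,
    mul_add, ← mul_assoc, ← T_add]
  rw [add_comm (T _ * _ * _)]
  congrm T ?_ * _ * _ + T ?_ * _ * _ + T ?_ * _ * _ <;> ring

/-- S_{m+1,l} = q^{-m} St_{m,l+1} + S_{m,l} + q^{-m+l-1} S_{m,l-1}. -/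
theorem S_succ_rec3 (m : ℕ) (l : ℤ) :
    Sq (m + 1) l =
      T (-(m : ℤ)) * Sqt m (l + 1) + Sq m l + T (-(m : ℤ) + l - 1) * Sq m (l - 1) := by
  let f (ν : ℤ) : ℤ[T;T⁻¹] := T (-(m : ℤ)) * sqtTerm m (l + 1) ν + sqTerm m l ν
  let g (ν : ℤ) : ℤ[T;T⁻¹] := T (-(m : ℤ) + l - 1) * sqTerm m (l - 1) ν
  have hf : f.HasFiniteSupport := by fun_prop
  have hg : g.HasFiniteSupport := by fun_prop
  calc
    Sq (m + 1) l = ∑ᶠ ν, sqTerm (m + 1) l ν := by simp only [Sq, sqTerm, Nat.cast_succ]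
    _ = ∑ᶠ ν, (f (ν - 1) + g ν) := finsum_congr (sqTerm_add_one (by omega) l)
    _ = ∑ᶠ ν, f (ν - 1) + ∑ᶠ ν, g ν :=
      finsum_add_distrib (hf.fun_comp_of_injective sub_left_injective) hg
    _ = ∑ᶠ ν, f ν + ∑ᶠ ν, g ν := by
      rw [← finsum_comp_equiv (Equiv.subRight (1 : ℤ)) (f := f)]; rfl
    _ = T (-(m : ℤ)) * Sqt m (l + 1) + Sq m l + T (-(m : ℤ) + l - 1) * Sq m (l - 1) := by
      rw [finsum_add_distrib (by fun_prop) (by fun_prop), ← mul_finsum, ← mul_finsum]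
      rfl
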